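/- Let ψ : D → D be analytic with sup_{z ∈ D} |ψ(z)| < 1, let z₀ ∈ D be the unique fixed point of ψ, and let C_ψ : H^∞(D) → H^∞(D) be the composition operator C_ψ(f) = f ∘ ψ. Then the spectrum of C_ψ as a bounded linear operator on the Banach space H^∞(D) is exactly {(ψ'(z₀))^n : n ∈ ℕ, n ≥ 1} ∪ {0, 1}, where ψ' denotes the complex derivative of ψ. -/

import Mathlib

set_option synthInstance.maxHeartbeats 1000000

/-- `H^∞(D)`: bounded analytic functions on the open unit disc, realized as the
subalgebra of those bounded continuous functions on the disc which agree with a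
function analytic on the disc.  The norm is the sup norm `‖f‖ = sup_{z ∈ D} |f z|`. -/
noncomputable def Hinf : Subalgebra ℂ (BoundedContinuousFunction (Metric.ball (0 : ℂ) 1) ℂ) where
  carrier := {f | ∃ g : ℂ → ℂ, DifferentiableOn ℂ g (Metric.ball 0 1) ∧
    ∀ z : Metric.ball (0 : ℂ) 1, f z = g z}
  mul_mem' := by
    rintro f₁ f₂ ⟨g₁, hg₁, he₁⟩ ⟨g₂, hg₂, he₂⟩
    exact ⟨g₁ * g₂, hg₁.mul hg₂, fun z => by simp [he₁ z, he₂ z]⟩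
  add_mem' := by
    rintro f₁ f₂ ⟨g₁, hg₁, he₁⟩ ⟨g₂, hg₂, he₂⟩
    exact ⟨g₁ + g₂, hg₁.add hg₂, fun z => by simp [he₁ z, he₂ z]⟩
  algebraMap_mem' := by
    intro c
    exact ⟨fun _ => c, differentiableOn_const c, fun z => by simp⟩

/-!
By Montel's theorem, restricting bounded analytic functions to a compact subset of the disc is a
compact operation, so `C_ψ` is compact and its nonzero spectrum consists of eigenvalues. Let
`α = ψ'(z₀)`. If `f` vanishes to order `m` at `z₀` with leading coefficient `b`, then the
coefficient of `(z - z₀) ^ m` in `f ∘ ψ - c f` is `(α ^ m - c) b`. Hence an eigenvalue is a power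
of `α`. Conversely, if `n` is the least exponent yielding the value `α ^ n`, then `f ∘ ψ - α ^ n f`
never vanishes to order exactly `n`, so `(z - z₀) ^ n` is not in the range of `C_ψ - α ^ n`.
Finally `|α| < 1`, so `0` is a limit of spectral values.
-/

open Set Metric Filter Topology
open scoped BoundedContinuousFunction

section AnalyticOrder

variable {𝕜 E : Type*} [NontriviallyNormedField 𝕜] [NormedAddCommGroup E] [NormedSpace 𝕜 E]
  {ψ : 𝕜 → 𝕜} {f : 𝕜 → E} {z₀ : 𝕜}

theorem analyticAt_dslope_self (hf : AnalyticAt 𝕜 f z₀) : AnalyticAt 𝕜 (dslope f z₀) z₀ :=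
  let ⟨_, hp⟩ := hf
  ⟨_, hp.has_fpower_series_dslope_fslope⟩

theorem exists_comp_sub_smul_eventuallyEq_pow_smul (hψ : AnalyticAt 𝕜 ψ z₀) (hfix : ψ z₀ = z₀)
    (hf : AnalyticAt 𝕜 f z₀) {m : ℕ} (hm : analyticOrderAt f z₀ = m) (c : 𝕜) :
    ∃ g : 𝕜 → E, AnalyticAt 𝕜 g z₀ ∧ (g z₀ = 0 ↔ deriv ψ z₀ ^ m = c) ∧
      ∀ᶠ z in 𝓝 z₀, f (ψ z) - c • f z = (z - z₀) ^ m • g z := by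
  obtain ⟨g, hg, hg₀, hfg⟩ := hf.analyticOrderAt_eq_natCast.1 hm
  have hψ_tendsto : Tendsto ψ (𝓝 z₀) (𝓝 z₀) := by
    simpa only [hfix] using hψ.continuousAt.tendsto
  have hgψ : AnalyticAt 𝕜 (g ∘ ψ) z₀ := AnalyticAt.comp (by rwa [hfix]) hψ
  refine ⟨fun z ↦ dslope ψ z₀ z ^ m • g (ψ z) - c • g z,
    (((analyticAt_dslope_self hψ).pow m).smul hgψ).sub (analyticAt_const.smul hg), ?_, ?_⟩
  · beta_reduce
    rw [dslope_same, hfix, ← sub_smul, smul_eq_zero_iff_left hg₀, sub_eq_zero]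
  · filter_upwards [hfg, hψ_tendsto.eventually hfg] with z hfz hfψz
    have hdslope : ψ z - z₀ = (z - z₀) * dslope ψ z₀ z := by
      simpa only [hfix, smul_eq_mul] using (sub_smul_dslope ψ z₀ z).symm
    rw [hfψz, hfz, hdslope, mul_pow, mul_smul, smul_sub, smul_comm c]

theorem analyticOrderAt_comp_sub_smul_eq (hψ : AnalyticAt 𝕜 ψ z₀) (hfix : ψ z₀ = z₀)
    (hf : AnalyticAt 𝕜 f z₀) {m : ℕ} (hm : analyticOrderAt f z₀ = m) {c : 𝕜}
    (hc : deriv ψ z₀ ^ m ≠ c) :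
    analyticOrderAt (fun z ↦ f (ψ z) - c • f z) z₀ = m := by
  obtain ⟨g, hg, hg₀, hfg⟩ := exists_comp_sub_smul_eventuallyEq_pow_smul hψ hfix hf hm c
  have hfψ : AnalyticAt 𝕜 (f ∘ ψ) z₀ := AnalyticAt.comp (by rwa [hfix]) hψ
  exact (hfψ.sub (analyticAt_const.smul hf)).analyticOrderAt_eq_natCast.2
    ⟨g, hg, hg₀.not.2 hc, hfg⟩

theorem lt_analyticOrderAt_comp_sub_smul (hψ : AnalyticAt 𝕜 ψ z₀) (hfix : ψ z₀ = z₀)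
    (hf : AnalyticAt 𝕜 f z₀) {m : ℕ} (hm : analyticOrderAt f z₀ = m) :
    m < analyticOrderAt (fun z ↦ f (ψ z) - deriv ψ z₀ ^ m • f z) z₀ := by
  obtain ⟨g, hg, hg₀, hfg⟩ := exists_comp_sub_smul_eventuallyEq_pow_smul hψ hfix hf hm
    (deriv ψ z₀ ^ m)
  have hpow : analyticOrderAt (fun z : 𝕜 ↦ (z - z₀) ^ m) z₀ = m :=
    analyticOrderAt_centeredMonomial
  have hg_order : analyticOrderAt g z₀ ≠ 0 := hg.analyticOrderAt_ne_zero.2 (hg₀.2 rfl)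
  calc (m : ℕ∞) < m + 1 := by exact_mod_cast m.lt_succ_self
    _ ≤ m + analyticOrderAt g z₀ := by gcongr; exact Order.one_le_iff_ne_zero.2 hg_order
    _ = analyticOrderAt ((fun z : 𝕜 ↦ (z - z₀) ^ m) • g) z₀ := by
        rw [analyticOrderAt_smul (by fun_prop) hg, hpow]
    _ = analyticOrderAt (fun z ↦ f (ψ z) - deriv ψ z₀ ^ m • f z) z₀ :=
        (analyticOrderAt_congr hfg).symm

theorem analyticOrderAt_comp_sub_pow_deriv_smul_ne (hψ : AnalyticAt 𝕜 ψ z₀) (hfix : ψ z₀ = z₀)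
    (hf : AnalyticAt 𝕜 f z₀) {n : ℕ} (hn : ∀ m < n, deriv ψ z₀ ^ m ≠ deriv ψ z₀ ^ n) :
    analyticOrderAt (fun z ↦ f (ψ z) - deriv ψ z₀ ^ n • f z) z₀ ≠ n := by
  intro hord
  rcases eq_or_ne (analyticOrderAt f z₀) ⊤ with htop | hne_top
  · have hψ_tendsto : Tendsto ψ (𝓝 z₀) (𝓝 z₀) := by
      simpa only [hfix] using hψ.continuousAt.tendsto
    have hf_zero := analyticOrderAt_eq_top.1 htop
    have : analyticOrderAt (fun z ↦ f (ψ z) - deriv ψ z₀ ^ n • f z) z₀ = ⊤ :=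
      analyticOrderAt_eq_top.2 <| by
        filter_upwards [hf_zero, hψ_tendsto.eventually hf_zero] with z hz hψz
        rw [hz, hψz, smul_zero, sub_zero]
    exact ENat.natCast_ne_top n (hord.symm.trans this)
  · obtain ⟨m, hm⟩ := ENat.ne_top_iff_exists.1 hne_top
    by_cases hpow : deriv ψ z₀ ^ m = deriv ψ z₀ ^ n
    · have hlt := lt_analyticOrderAt_comp_sub_smul hψ hfix hf hm.symm
      rw [hpow, hord, Nat.cast_lt] at hlt
      exact hn m hlt hpow
    · have heq := analyticOrderAt_comp_sub_smul_eq hψ hfix hf hm.symm hpow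
      rw [hord, Nat.cast_inj] at heq
      exact hpow (by rw [heq])

end AnalyticOrder

section SelfMap

variable {U : Set ℂ} {ψ : ℂ → ℂ} {z₀ : ℂ}

theorem norm_deriv_le_one_of_mapsTo_of_isBounded (hU : IsOpen U) (hUb : Bornology.IsBounded U)
    (hψ : DifferentiableOn ℂ ψ U) (hmaps : MapsTo ψ U U) (hz₀ : z₀ ∈ U) (hfix : ψ z₀ = z₀) :
    ‖deriv ψ z₀‖ ≤ 1 := by
  obtain ⟨δ, hδ, hδU⟩ := isOpen_iff.1 hU z₀ hz₀
  obtain ⟨R, hR⟩ := hUb.subset_closedBall z₀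
  have hderiv : HasDerivAt ψ (deriv ψ z₀) z₀ := (hψ.differentiableAt (hU.mem_nhds hz₀)).hasDerivAt
  have hpow (k : ℕ) : ‖deriv ψ z₀‖ ^ k ≤ R / δ := by
    have hmaps_iterate : MapsTo ψ^[k] (ball z₀ δ) (closedBall (ψ^[k] z₀) R) := by
      rw [Function.iterate_fixed hfix]
      exact ((hmaps.iterate k).mono_left hδU).mono_right hR
    rw [← norm_pow, ← (hderiv.iterate z₀ hfix k).deriv]
    exact Complex.norm_deriv_le_div_of_mapsTo_ball ((hψ.iterate hmaps k).mono hδU)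
      hmaps_iterate hδ
  by_contra! hlt
  obtain ⟨k, hk⟩ := pow_unbounded_of_one_lt (R / δ) hlt
  exact (hpow k).not_gt hk

-- The margin `δ` leaves room for the self-map `z ↦ ψ z + ε * deriv ψ z₀ * (z - z₀)`, whose
-- derivative at `z₀` is larger by the factor `1 + ε`.
theorem norm_deriv_lt_one_of_ball_subset (hU : IsOpen U) (hUb : Bornology.IsBounded U)
    (hψ : DifferentiableOn ℂ ψ U) {δ : ℝ} (hδ : 0 < δ) (hball : ∀ z ∈ U, ball (ψ z) δ ⊆ U)
    (hz₀ : z₀ ∈ U) (hfix : ψ z₀ = z₀) :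
    ‖deriv ψ z₀‖ < 1 := by
  obtain ⟨R, hR⟩ := hUb.subset_closedBall z₀
  set a := deriv ψ z₀
  obtain ⟨ε, hε, hεδ⟩ : ∃ ε : ℝ, 0 < ε ∧ ε * (‖a‖ * R) < δ := by
    have hR₀ : 0 ≤ R := by simpa using hR hz₀
    refine ⟨δ / (‖a‖ * R + 1), by positivity, ?_⟩
    rw [div_mul_eq_mul_div, div_lt_iff₀ (by positivity)]
    linarith
  set φ : ℂ → ℂ := fun z ↦ ψ z + ε * a * (z - z₀)
  have hφ : DifferentiableOn ℂ φ U := by fun_prop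
  have hφ_maps : MapsTo φ U U := by
    intro z hz
    apply hball z hz
    have hzR : ‖z - z₀‖ ≤ R := mem_closedBall_iff_norm.1 (hR hz)
    rw [mem_ball_iff_norm, add_sub_cancel_left, norm_mul, norm_mul, Complex.norm_of_nonneg hε.le,
      mul_assoc]
    exact lt_of_le_of_lt (by gcongr) hεδ
  have hφ_fix : φ z₀ = z₀ := by simp [φ, hfix]
  have hφ_deriv : deriv φ z₀ = (1 + ε : ℝ) * a := by
    have hderiv : HasDerivAt ψ a z₀ := (hψ.differentiableAt (hU.mem_nhds hz₀)).hasDerivAt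
    have hlin : HasDerivAt (fun z ↦ ε * a * (z - z₀)) (ε * a * 1) z₀ :=
      ((hasDerivAt_id z₀).sub_const z₀).const_mul _
    have hsum : HasDerivAt φ (a + ε * a * 1) z₀ := hderiv.add hlin
    rw [hsum.deriv]
    push_cast
    ring
  have hle := norm_deriv_le_one_of_mapsTo_of_isBounded hU hUb hφ hφ_maps hz₀ hφ_fix
  rw [hφ_deriv, norm_mul, Complex.norm_of_nonneg (by positivity)] at hle
  nlinarith [norm_nonneg a]

end SelfMap

theorem equicontinuousOn_of_differentiableOn_of_norm_le {ι E : Type*} [NormedAddCommGroup E]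
    [NormedSpace ℂ E] {F : ι → ℂ → E} {U : Set ℂ} (hU : IsOpen U)
    (hF : ∀ i, DifferentiableOn ℂ (F i) U) {M : ℝ} (hM : ∀ i, ∀ z ∈ U, ‖F i z‖ ≤ M) :
    EquicontinuousOn F U := by
  intro z hz
  obtain ⟨δ, hδ, hδU⟩ := isOpen_iff.1 hU z hz
  refine EquicontinuousAt.equicontinuousWithinAt ?_ U
  refine equicontinuousAt_of_continuity_modulus (fun w ↦ (M + M) / δ * dist w z) ?_ F ?_
  · exact Continuous.tendsto' (by fun_prop) _ _ (by simp)
  · filter_upwards [ball_mem_nhds z hδ] with w hw i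
    rw [dist_comm]
    refine Complex.dist_le_div_mul_dist_of_mapsTo_ball ((hF i).mono hδU) (fun v hv ↦ ?_) hw
    rw [mem_closedBall]
    exact (dist_le_norm_add_norm _ _).trans (add_le_add (hM i v (hδU hv)) (hM i z hz))

-- Not stated in a general Banach algebra: at `Hinf →L[ℂ] Hinf`, unifying `ContinuousLinearMap.ring`
-- with the normed-ring structure is prohibitively slow.
theorem zero_mem_spectrum_of_forall_pow_mem {𝕜 E : Type*} [NontriviallyNormedField 𝕜]
    [NormedAddCommGroup E] [NormedSpace 𝕜 E] [CompleteSpace E] {T : E →L[𝕜] E} {a : 𝕜}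
    (ha : ‖a‖ < 1) (hmem : ∀ n : ℕ, a ^ n ∈ spectrum 𝕜 T) : 0 ∈ spectrum 𝕜 T :=
  (spectrum.isClosed T).mem_of_tendsto (tendsto_pow_atTop_nhds_zero_of_norm_lt_one ha)
    (.of_forall hmem)

namespace Hinf

theorem exists_apply_eq {g : ℂ → ℂ} (hg : DifferentiableOn ℂ g (ball 0 1)) {C : ℝ}
    (hC : ∀ z ∈ ball (0 : ℂ) 1, ‖g z‖ ≤ C) :
    ∃ f : Hinf, ∀ z : ball (0 : ℂ) 1, f.1 z = g z :=
  ⟨⟨.ofNormedAddCommGroup (fun z : ball (0 : ℂ) 1 ↦ g z) hg.continuousOn.domRestrict C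
    fun z ↦ hC z z.2, g, hg, fun _ ↦ rfl⟩, fun _ ↦ rfl⟩

theorem isClosed : IsClosed (Hinf : Set (ball (0 : ℂ) 1 →ᵇ ℂ)) := by
  rw [← isSeqClosed_iff_isClosed]
  intro F f hF hlim
  choose g hg hFg using hF
  set e : ℂ → ℂ := Function.extend Subtype.val f 0
  have he (z : ball (0 : ℂ) 1) : e z = f z := Subtype.val_injective.extend_apply f 0 z
  have hunif : TendstoUniformlyOn g e atTop (ball 0 1) := by
    rw [tendstoUniformlyOn_iff_tendstoUniformly_comp_coe]
    convert! BoundedContinuousFunction.tendsto_iff_tendstoUniformly.1 hlim using 1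
    · ext n z
      exact (hFg n z).symm
    · ext z
      exact he z
  exact ⟨e, hunif.tendstoLocallyUniformlyOn.differentiableOn (.of_forall hg) isOpen_ball,
    fun z ↦ (he z).symm⟩

instance : CompleteSpace Hinf := isClosed.completeSpace_coe

theorem equicontinuous_closedBall (M : ℝ) :
    Equicontinuous fun f : closedBall (0 : Hinf) M ↦ (f.1.1 : ball (0 : ℂ) 1 → ℂ) := by
  choose g hg hfg using fun f : closedBall (0 : Hinf) M ↦ f.1.2
  have hbound (f : closedBall (0 : Hinf) M) (z : ℂ) (hz : z ∈ ball (0 : ℂ) 1) : ‖g f z‖ ≤ M := by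
    rw [← hfg f ⟨z, hz⟩]
    exact (f.1.1.norm_coe_le_norm _).trans (mem_closedBall_zero_iff.1 f.2)
  have hequi := equicontinuousOn_of_differentiableOn_of_norm_le isOpen_ball hg hbound
  rw [← equicontinuous_restrict_iff] at hequi
  convert! hequi using 2 with f
  exact funext (hfg f)

theorem isCompactOperator_compContinuous {X : Type*} [TopologicalSpace X] [CompactSpace X]
    (φ : C(X, ball (0 : ℂ) 1)) :
    IsCompactOperator fun f : Hinf ↦ f.1.compContinuous φ := by
  rw [isCompactOperator_iff_exists_mem_nhds_isCompact_closure_image]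
  refine ⟨closedBall 0 1, closedBall_mem_nhds 0 one_pos, ?_⟩
  refine BoundedContinuousFunction.arzela_ascoli _ (isCompact_closedBall (0 : ℂ) 1) _ ?_ ?_
  · rintro _ x ⟨f, hf, rfl⟩
    exact mem_closedBall_zero_iff.2
      ((f.1.norm_coe_le_norm _).trans (mem_closedBall_zero_iff.1 hf))
  · intro x V hV
    filter_upwards [φ.continuous.continuousAt (equicontinuous_closedBall 1 (φ x) V hV)] with y hy
    rintro ⟨_, f, hf, rfl⟩
    exact hy ⟨f, hf⟩

section CompositionOperator

variable {ψ : ℂ → ℂ} {hmaps : MapsTo ψ (ball (0 : ℂ) 1) (ball (0 : ℂ) 1)} {T : Hinf →L[ℂ] Hinf}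

theorem isCompactOperator_of_mapsTo_isCompact (hψ : ContinuousOn ψ (ball 0 1))
    (hT : ∀ (f : Hinf) (z : ball (0 : ℂ) 1), (T f).1 z = f.1 ⟨ψ z, hmaps z.2⟩)
    {K : Set ℂ} (hK : IsCompact K) (hK_sub : K ⊆ ball 0 1) (hψK : MapsTo ψ (ball 0 1) K) :
    IsCompactOperator T := by
  have : CompactSpace K := isCompact_iff_compactSpace.1 hK
  let incl : C(K, ball (0 : ℂ) 1) := ⟨inclusion hK_sub, continuous_inclusion hK_sub⟩
  let ψK : C(ball (0 : ℂ) 1, K) := ⟨hψK.restrict, hψ.mapsToRestrict hψK⟩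
  have hcomp : IsCompactOperator fun f : Hinf ↦ (f.1.compContinuous incl).compContinuous ψK :=
    (isCompactOperator_compContinuous incl).continuous_comp
      (BoundedContinuousFunction.continuous_compContinuous ψK)
  have hT_eq (f : Hinf) : (f.1.compContinuous incl).compContinuous ψK = (T f).1 :=
    BoundedContinuousFunction.ext fun z ↦ (hT f z).symm
  simp only [hT_eq] at hcomp
  exact hcomp.codRestrict (V := Subalgebra.toSubmodule Hinf) (fun f ↦ (T f).2) isClosed

theorem exists_eq_pow_deriv_of_hasEigenvalue (hψ : DifferentiableOn ℂ ψ (ball 0 1))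
    (hT : ∀ (f : Hinf) (z : ball (0 : ℂ) 1), (T f).1 z = f.1 ⟨ψ z, hmaps z.2⟩)
    {z₀ : ℂ} (hz₀ : z₀ ∈ ball (0 : ℂ) 1) (hfix : ψ z₀ = z₀) {c : ℂ}
    (hc : Module.End.HasEigenvalue (T : Module.End ℂ Hinf) c) :
    ∃ n : ℕ, c = deriv ψ z₀ ^ n := by
  obtain ⟨f, hf⟩ := hc.exists_hasEigenvector
  obtain ⟨g, hg, hfg⟩ := f.2
  have hball : ball (0 : ℂ) 1 ∈ 𝓝 z₀ := isOpen_ball.mem_nhds hz₀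
  have hg_eq : ∀ z ∈ ball (0 : ℂ) 1, g (ψ z) - c • g z = 0 := fun z hz ↦ by
    have hTf : (T f).1 ⟨z, hz⟩ = c • f.1 ⟨z, hz⟩ :=
      congrArg (fun p : Hinf ↦ p.1 ⟨z, hz⟩) hf.apply_eq_smul
    rw [hT, hfg, hfg] at hTf
    exact sub_eq_zero.2 hTf
  have hg_order : analyticOrderAt g z₀ ≠ ⊤ := fun htop ↦ hf.2 <| by
    have hg_zero := (hg.analyticOnNhd isOpen_ball).eqOn_zero_of_preconnected_of_eventuallyEq_zero
      (convex_ball 0 1).isPreconnected hz₀ (analyticOrderAt_eq_top.1 htop)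
    exact Subtype.ext (BoundedContinuousFunction.ext fun z ↦ (hfg z).trans (hg_zero z.2))
  obtain ⟨m, hm⟩ := ENat.ne_top_iff_exists.1 hg_order
  refine ⟨m, by_contra fun hcm ↦ ENat.natCast_ne_top m ?_⟩
  rw [← analyticOrderAt_comp_sub_smul_eq (hψ.analyticAt hball) hfix (hg.analyticAt hball) hm.symm
    (Ne.symm hcm)]
  exact analyticOrderAt_eq_top.2 (eventually_of_mem hball hg_eq)

theorem pow_deriv_mem_spectrum (hψ : DifferentiableOn ℂ ψ (ball 0 1))
    (hT : ∀ (f : Hinf) (z : ball (0 : ℂ) 1), (T f).1 z = f.1 ⟨ψ z, hmaps z.2⟩)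
    {z₀ : ℂ} (hz₀ : z₀ ∈ ball (0 : ℂ) 1) (hfix : ψ z₀ = z₀) (n : ℕ) :
    deriv ψ z₀ ^ n ∈ spectrum ℂ T := by
  classical
  have hex : ∃ k, deriv ψ z₀ ^ k = deriv ψ z₀ ^ n := ⟨n, rfl⟩
  obtain ⟨k, hk, hmin⟩ : ∃ k, deriv ψ z₀ ^ k = deriv ψ z₀ ^ n ∧
      ∀ m < k, deriv ψ z₀ ^ m ≠ deriv ψ z₀ ^ k :=
    ⟨Nat.find hex, Nat.find_spec hex, fun m hm ↦ (Nat.find_spec hex).symm ▸ Nat.find_min hex hm⟩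
  rw [← hk]
  by_contra hmem
  have hsurj := (ContinuousLinearMap.isUnit_iff_bijective.1 (spectrum.notMem_iff.1 hmem)).surjective
  obtain ⟨p, hp⟩ : ∃ p : Hinf, ∀ z : ball (0 : ℂ) 1, p.1 z = (z - z₀) ^ k :=
    exists_apply_eq (g := fun z ↦ (z - z₀) ^ k) (C := 2 ^ k) (by fun_prop) fun z hz ↦ by
      rw [norm_pow]
      gcongr
      linarith [norm_sub_le z z₀, mem_ball_zero_iff.1 hz, mem_ball_zero_iff.1 hz₀]
  obtain ⟨f, hf⟩ := hsurj (-p)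
  obtain ⟨g, hg, hfg⟩ := f.2
  have hball : ball (0 : ℂ) 1 ∈ 𝓝 z₀ := isOpen_ball.mem_nhds hz₀
  have hg_eq : ∀ z ∈ ball (0 : ℂ) 1, g (ψ z) - deriv ψ z₀ ^ k • g z = (z - z₀) ^ k := fun z hz ↦ by
    have hfz : deriv ψ z₀ ^ k • f.1 ⟨z, hz⟩ - (T f).1 ⟨z, hz⟩ = -p.1 ⟨z, hz⟩ :=
      congrArg (fun q : Hinf ↦ q.1 ⟨z, hz⟩) hf
    rw [hT, hfg, hfg, hp] at hfz
    rw [← neg_sub, hfz, neg_neg]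
  refine analyticOrderAt_comp_sub_pow_deriv_smul_ne (hψ.analyticAt hball) hfix
    (hg.analyticAt hball) hmin ?_
  rw [analyticOrderAt_congr (eventually_of_mem hball hg_eq)]
  exact analyticOrderAt_centeredMonomial

end CompositionOperator

end Hinf

/-- If `ψ : D → D` is analytic with `sup_{z ∈ D} ‖ψ z‖ ≤ r < 1`, with (unique) fixed
point `z₀ ∈ D`, and `C_ψ : H^∞(D) → H^∞(D)` is the composition operator `f ↦ f ∘ ψ`,
then the spectrum of `C_ψ` is `{(ψ'(z₀))^n : n ≥ 1} ∪ {0, 1}`. -/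
theorem spectrum_composition_operator
    (ψ : ℂ → ℂ) (hψ : DifferentiableOn ℂ ψ (Metric.ball 0 1))
    (hmaps : Set.MapsTo ψ (Metric.ball (0 : ℂ) 1) (Metric.ball (0 : ℂ) 1))
    (r : ℝ) (hr0 : 0 ≤ r) (hr1 : r < 1)
    (hbd : ∀ z ∈ Metric.ball (0 : ℂ) 1, ‖ψ z‖ ≤ r)
    (z₀ : ℂ) (hz₀ : z₀ ∈ Metric.ball (0 : ℂ) 1) (hfix : ψ z₀ = z₀)
    (T : Hinf →L[ℂ] Hinf)
    (hT : ∀ (f : Hinf) (z : Metric.ball (0 : ℂ) 1),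
      (T f : BoundedContinuousFunction (Metric.ball (0 : ℂ) 1) ℂ) z =
        (f : BoundedContinuousFunction (Metric.ball (0 : ℂ) 1) ℂ) ⟨ψ z, hmaps z.2⟩) :
    spectrum ℂ T =
      {lam : ℂ | ∃ n : ℕ, 1 ≤ n ∧ lam = (deriv ψ z₀) ^ n} ∪ {0, 1} := by
  have hα : ‖deriv ψ z₀‖ < 1 :=
    norm_deriv_lt_one_of_ball_subset isOpen_ball isBounded_ball hψ (sub_pos.2 hr1)
      (fun z hz ↦ ball_subset_ball' (by rw [dist_zero_right]; linarith [hbd z hz])) hz₀ hfix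
  have hcompact : IsCompactOperator T :=
    Hinf.isCompactOperator_of_mapsTo_isCompact hψ.continuousOn hT (isCompact_closedBall 0 r)
      (closedBall_subset_ball hr1) fun z hz ↦ mem_closedBall_zero_iff.2 (hbd z hz)
  have hpow (n : ℕ) : deriv ψ z₀ ^ n ∈ spectrum ℂ T :=
    Hinf.pow_deriv_mem_spectrum hψ hT hz₀ hfix n
  refine Subset.antisymm (fun c hc ↦ ?_) ?_
  · rcases eq_or_ne c 0 with hc₀ | hc₀
    · exact .inr (.inl hc₀)
    obtain ⟨n, rfl⟩ := Hinf.exists_eq_pow_deriv_of_hasEigenvalue hψ hT hz₀ hfix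
      ((hcompact.hasEigenvalue_iff_mem_spectrum hc₀).2 hc)
    rcases n.eq_zero_or_pos with rfl | hn
    · exact .inr (.inr (pow_zero _))
    · exact .inl ⟨n, hn, rfl⟩
  · rintro _ (⟨n, -, rfl⟩ | rfl | rfl)
    exacts [hpow n, zero_mem_spectrum_of_forall_pow_mem hα hpow, pow_zero (deriv ψ z₀) ▸ hpow 0]
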